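/- Let X ⊆ A^ℤ be a transitive subshift of finite type that is not mixing. Then X is not the generic limit set of any cellular automaton on A^ℤ. -/

import Mathlib

open Filter Set Function

namespace Gls

variable {A : Type*}

/-- The left shift map on `A^ℤ`. -/
def shift (x : ℤ → A) : ℤ → A := fun i => x (i + 1)

/-- A cellular automaton: a continuous shift-commuting self-map of the full shift. -/
def IsCA [TopologicalSpace A] (f : (ℤ → A) → (ℤ → A)) : Prop :=
  Continuous f ∧ f ∘ shift = shift ∘ f

/-- The set of limit points of the forward orbit of `x` under `f`. -/
def omegaSet [TopologicalSpace A] (f : (ℤ → A) → (ℤ → A)) (x : ℤ → A) : Set (ℤ → A) :=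
  {y | MapClusterPt y atTop fun t => f^[t] x}

/-- The realm of attraction of `Y`. -/
def realm [TopologicalSpace A] (f : (ℤ → A) → (ℤ → A)) (Y : Set (ℤ → A)) : Set (ℤ → A) :=
  {x | omegaSet f x ⊆ Y}

/-- The generic limit set: the intersection of all closed sets whose realm is comeager. -/
def genLimitSet [TopologicalSpace A] (f : (ℤ → A) → (ℤ → A)) : Set (ℤ → A) :=
  ⋂₀ {C | IsClosed C ∧ realm f C ∈ residual (ℤ → A)}

/-- The word `x_{[i, i+n)}` of length `n` read in the configuration `x` from position `i`. -/
def word (x : ℤ → A) (i : ℤ) (n : ℕ) : List A :=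
  (List.range n).map fun k => x (i + k)

/-- The cylinder set `[w]_i`. -/
def cylinder (w : List A) (i : ℤ) : Set (ℤ → A) := {x | word x i w.length = w}

/-- The language of `X`: all finite words occurring in points of `X`. -/
def lang (X : Set (ℤ → A)) : Set (List A) :=
  {w | ∃ x ∈ X, ∃ i : ℤ, word x i w.length = w}


/-- A subshift `Y` is transitive if any two words of its language can be joined. -/
def IsTransitiveSubshift {A : Type*} (Y : Set (ℤ → A)) : Prop :=
  ∀ u ∈ lang Y, ∀ v ∈ lang Y, ∃ w : List A, u ++ w ++ v ∈ lang Y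

/-- A subshift `X` is mixing if for all `u, v ∈ L(X)` there exists `N` such that for every
`n ≥ N` there is a word `w` of length `n` with `u w v ∈ L(X)`. -/
def IsMixing {A : Type*} (X : Set (ℤ → A)) : Prop :=
  ∀ u ∈ lang X, ∀ v ∈ lang X, ∃ N : ℕ, ∀ n ≥ N, ∃ w : List A,
    w.length = n ∧ u ++ w ++ v ∈ lang X

/-!
A transitive subshift of finite type `X` that is not mixing carries a locally constant phase in
`ℤ/p`, `p ≠ 1`, which the shift increases by one: the travel time from a fixed word of `X`, taken
modulo the gcd `p` of the return times to that word. If `X` were the generic limit set of `f`, then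
by transitivity `f` would increase the phase on `X` by a constant. By Baire, the forward orbits of
all points of some nonempty open set `V` have one and the same phase from some time on. For every
large `n` some generic `x` has both `x` and `σⁿ x` in `V`; since the orbit of `x` approaches `X`,
its phase and that of `σⁿ x` eventually differ by `n`. Hence `n = 0` in `ℤ/p` for all large `n`, so
`p = 1`.
-/

lemma apply_iterate_of_mapsTo {α β : Type*} {σ : α → α} {h : β → β} {g : α → β} {X : Set α}
    (hσ : MapsTo σ X X) (hg : ∀ x ∈ X, g (σ x) = h (g x)) (n : ℕ) {x : α} (hx : x ∈ X) :
    g (σ^[n] x) = h^[n] (g x) := by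
  induction n with
  | zero => rfl
  | succ n ih => rw [iterate_succ_apply', hg _ (hσ.iterate n hx), ih, iterate_succ_apply']

lemma isLocallyConstant_of_dependsOn {ι β : Type*} [TopologicalSpace A] [DiscreteTopology A]
    {g : (ι → A) → β} {s : Set ι} (hs : s.Finite) (hg : DependsOn g s) :
    IsLocallyConstant g := by
  have := hs.to_subtype
  rw [IsLocallyConstant.iff_eventually_eq]
  intro x
  have hnear : ∀ᶠ y in nhds x, s.domRestrict y = s.domRestrict x :=
    (Pi.continuous_domRestrict s).continuousAt.eventually
      ((isOpen_discrete {s.domRestrict x}).mem_nhds rfl)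
  filter_upwards [hnear] with y hy
  exact hg fun i hi => congrFun hy ⟨i, hi⟩

lemma exists_nonempty_interior_forall_ge {α β : Type*} [TopologicalSpace α] [BaireSpace α]
    [Nonempty α] [TopologicalSpace β] {F : ℕ → α → β} (hF : ∀ t, Continuous (F t)) {O : Set β}
    (hO : IsClosed O) (h : ∀ᶠ x in residual α, ∀ᶠ t in atTop, F t x ∈ O) :
    ∃ T, (interior {x | ∀ t ≥ T, F t x ∈ O}).Nonempty := by
  obtain ⟨D, hDO, hDδ, hD⟩ := mem_residual.1 h
  have hclosed : ∀ T, IsClosed {x | ∀ t ≥ T, F t x ∈ O} := by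
    intro T
    simp only [ofPred_forall]
    exact isClosed_biInter fun t _ => hO.preimage (hF t)
  have hcover : D ⊆ ⋃ T, {x | ∀ t ≥ T, F t x ∈ O} := fun x hx =>
    mem_iUnion.2 (eventually_atTop.1 (hDO hx))
  exact nonempty_iUnion.1 (hDδ.dense_iUnion_interior_of_closed hD hclosed hcover).nonempty

-- In `word` the list `List.range n` is coerced to a list of integers by a monadic lift.
lemma word_eq_map (x : ℤ → A) (i : ℤ) (n : ℕ) :
    word x i n = (List.range n).map fun k : ℕ => x (i + k) := by
  simpa [word, List.map_flatMap] using List.map_eq_flatMap.symm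

lemma word_length (x : ℤ → A) (i : ℤ) (n : ℕ) : (word x i n).length = n := by
  simp [word]

lemma word_add (x : ℤ → A) (i : ℤ) (n k : ℕ) :
    word x i (n + k) = word x i n ++ word x (i + n) k := by
  simp [word_eq_map, List.range_add, add_assoc]

lemma take_word (x : ℤ → A) (i : ℤ) {k n : ℕ} (hk : k ≤ n) :
    (word x i n).take k = word x i k := by
  simp [word_eq_map, ← List.map_take, List.take_range, hk]

lemma word_eq_word_of_le {x y : ℤ → A} {i j : ℤ} {k n : ℕ} (hk : k ≤ n)
    (h : word x i n = word y j n) : word x i k = word y j k := by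
  rw [← take_word x i hk, h, take_word y j hk]

lemma word_eq_word_iff {x y : ℤ → A} {i : ℤ} {n : ℕ} :
    word x i n = word y i n ↔ EqOn x y (Ico i (i + n)) := by
  simp only [word_eq_map, List.map_inj_left, List.mem_range]
  refine ⟨fun h j hj => ?_, fun h k hk => h ⟨by lia, by lia⟩⟩
  obtain ⟨k, rfl⟩ := Int.le.dest hj.1
  exact h k (by have := hj.2; omega)

lemma word_mem_lang {X : Set (ℤ → A)} {x : ℤ → A} (hx : x ∈ X) (i : ℤ) (n : ℕ) :
    word x i n ∈ lang X :=
  ⟨x, hx, i, by rw [word_length]⟩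

/-- The `n`-th power of the shift map, for an integer `n` of either sign. -/
def translate (n : ℤ) (x : ℤ → A) : ℤ → A := fun i => x (i + n)

lemma shift_iterate (n : ℕ) : shift^[n] = translate (A := A) n := by
  induction n with
  | zero => funext x i; simp [translate]
  | succ n ih =>
    rw [iterate_succ', ih]
    funext x i
    simp [translate, shift, add_comm, add_left_comm]

lemma word_translate (n : ℤ) (x : ℤ → A) (i : ℤ) (k : ℕ) :
    word (translate n x) i k = word x (i + n) k := by
  simp [word_eq_map, translate, add_right_comm]

/-- A subshift of finite type: the configurations avoiding a finite set of words. -/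
def IsSFT (X : Set (ℤ → A)) : Prop :=
  ∃ F : Set (List A), F.Finite ∧ X = {x : ℤ → A | ∀ w ∈ F, ∀ i : ℤ, word x i w.length ≠ w}

lemma IsSFT.mapsTo_translate {X : Set (ℤ → A)} (hX : IsSFT X) (n : ℤ) :
    MapsTo (translate n) X X := by
  obtain ⟨F, -, rfl⟩ := hX
  intro x hx w hw i
  rw [word_translate]
  exact hx w hw (i + n)

/-- The memory property of subshifts of finite type: two points of `X` that share a word of length
`m` at the same position can be glued along it. -/
def Gluing (X : Set (ℤ → A)) (m : ℕ) : Prop :=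
  ∀ x ∈ X, ∀ y ∈ X, ∀ n : ℤ, word x n m = word y n m →
    ∃ z ∈ X, EqOn z x (Iio (n + m)) ∧ EqOn z y (Ici n)

lemma Gluing.mono {X : Set (ℤ → A)} {m a : ℕ} (hm : Gluing X m) (hma : m ≤ a) : Gluing X a := by
  intro x hx y hy n hxy
  obtain ⟨z, hz, hzx, hzy⟩ := hm x hx y hy n (word_eq_word_of_le hma hxy)
  refine ⟨z, hz, fun i hi => ?_, hzy⟩
  rcases lt_or_ge i n with hin | hni
  · exact hzx (show i < n + m by omega)
  · rw [hzy hni, word_eq_word_iff.1 hxy ⟨hni, hi⟩]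

lemma IsSFT.exists_gluing {X : Set (ℤ → A)} (hX : IsSFT X) : ∃ m, Gluing X m := by
  classical
  obtain ⟨F, hF, rfl⟩ := hX
  obtain ⟨m, hm⟩ := (hF.image List.length).bddAbove
  refine ⟨m, fun x hx y hy n hxy => ?_⟩
  rw [word_eq_word_iff] at hxy
  set z : ℤ → A := (Iio n).piecewise x y
  have hzy : EqOn z y (Ici n) := fun i hi =>
    piecewise_eq_of_notMem _ _ _ (show ¬ i < n from not_lt.2 hi)
  have hzx : EqOn z x (Iio (n + m)) := by
    intro i hi
    rcases lt_or_ge i n with hin | hni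
    · exact piecewise_eq_of_mem _ _ _ hin
    · rw [hzy hni, hxy ⟨hni, hi⟩]
  refine ⟨z, fun w hw i => ?_, hzx, hzy⟩
  have hwm : w.length ≤ m := hm (mem_image_of_mem _ hw)
  rcases lt_or_ge i n with hin | hni
  · rw [word_eq_word_iff.2 (hzx.mono fun j hj => lt_of_lt_of_le hj.2 (by omega))]
    exact hx w hw i
  · rw [word_eq_word_iff.2 (hzy.mono fun j hj => hni.trans hj.1)]
    exact hy w hw i

/-- Some point of `X` reads the central word `x_{[0, a)}` of `x` at position `0` and that of `y` at
position `n`, so that one can travel in `X` from the one to the other in `n` steps. -/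
def Reaches (X : Set (ℤ → A)) (a n : ℕ) (x y : ℤ → A) : Prop :=
  ∃ z ∈ X, word z 0 a = word x 0 a ∧ word z n a = word y 0 a

section Travel

variable {X : Set (ℤ → A)} {a n k : ℕ} {x y z : ℤ → A}

lemma Reaches.refl (hx : x ∈ X) : Reaches X a 0 x x :=
  ⟨x, hx, rfl, rfl⟩

lemma reaches_shift (hx : x ∈ X) : Reaches X a 1 x (shift x) := by
  refine ⟨x, hx, rfl, ?_⟩
  rw [← iterate_one shift, shift_iterate, word_translate, zero_add]

lemma Reaches.trans (hX : ∀ n, MapsTo (translate n) X X) (ha : Gluing X a)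
    (hxy : Reaches X a n x y) (hyz : Reaches X a k y z) : Reaches X a (n + k) x z := by
  obtain ⟨p, hp, hpx, hpy⟩ := hxy
  obtain ⟨q, hq, hqy, hqz⟩ := hyz
  obtain ⟨r, hr, hrp, hrq⟩ := ha p hp _ (hX (-n) hq) n
    (by rw [hpy, ← hqy, word_translate, add_neg_cancel])
  refine ⟨r, hr, ?_, ?_⟩
  · rw [← hpx]
    exact word_eq_word_iff.2 (hrp.mono fun i hi => lt_of_lt_of_le hi.2 (by omega))
  · rw [word_eq_word_iff.2 (hrq.mono fun i hi => le_trans (by omega) hi.1), word_translate, ← hqz]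
    congr 1
    push_cast
    ring

lemma IsTransitiveSubshift.exists_reaches (ht : IsTransitiveSubshift X)
    (hX : ∀ n, MapsTo (translate n) X X) (a : ℕ) (hx : x ∈ X) (hy : y ∈ X) :
    ∃ n, Reaches X a n x y := by
  obtain ⟨w, z, hz, i, hzi⟩ := ht _ (word_mem_lang hx 0 a) _ (word_mem_lang hy 0 a)
  simp only [List.length_append, word_length, word_add] at hzi
  obtain ⟨hzxw, hzy⟩ := List.append_inj hzi (by simp [word_length])
  obtain ⟨hzx, -⟩ := List.append_inj hzxw (by simp [word_length])
  refine ⟨a + w.length, translate i z, hX i hz, ?_, ?_⟩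
  · rw [word_translate, zero_add, hzx]
  · rw [word_translate, add_comm, hzy]

lemma isMixing_of_eventually_reaches (hX : ∀ n, MapsTo (translate n) X X) (m : ℕ)
    (h : ∀ a ≥ m, ∀ x ∈ X, ∀ y ∈ X, ∀ᶠ n in atTop, Reaches X a n x y) : IsMixing X := by
  rintro u ⟨x, hx, i, hu⟩ v ⟨y, hy, j, hv⟩
  set a := max m (max u.length v.length)
  obtain ⟨N, hN⟩ := eventually_atTop.1
    (h a (le_max_left _ _) _ (hX i hx) _ (hX j hy))
  refine ⟨N, fun n hn => ?_⟩
  obtain ⟨z, hz, hzx, hzy⟩ := hN (u.length + n) (by omega)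
  have hzu : word z 0 u.length = u := by
    rw [word_eq_word_of_le (by omega) hzx, word_translate, zero_add, hu]
  have hzv : word z (u.length + n : ℕ) v.length = v := by
    rw [word_eq_word_of_le (by omega) hzy, word_translate, zero_add, hv]
  refine ⟨word z u.length n, word_length _ _ _, ?_⟩
  have huwv := word_mem_lang hz 0 (u.length + n + v.length)
  rwa [word_add, word_add, zero_add, zero_add, hzu, hzv] at huwv

/-- The times at which the central word of length `a` of `x` can recur in `X`. -/
def returnTimes (hX : ∀ n, MapsTo (translate n) X X) (ha : Gluing X a) (hx : x ∈ X) :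
    AddSubmonoid ℕ where
  carrier := {n | Reaches X a n x x}
  zero_mem' := Reaches.refl hx
  add_mem' := Reaches.trans hX ha

/-- The gcd of the times at which the central word of length `a` of `x` can recur in `X`. -/
noncomputable def period (X : Set (ℤ → A)) (a : ℕ) (x : ℤ → A) : ℕ :=
  Nat.setGcd {n | Reaches X a n x x}

lemma eventually_reaches_of_period_eq_one (hX : ∀ n, MapsTo (translate n) X X) (ha : Gluing X a)
    (ht : IsTransitiveSubshift X) (hx : x ∈ X) (hy : y ∈ X) (hp : period X a x = 1) :
    ∀ᶠ n in atTop, Reaches X a n x y := by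
  obtain ⟨N, hN⟩ := Nat.exists_mem_closure_of_ge (returnTimes hX ha hx : Set ℕ)
  rw [AddSubmonoid.closure_eq] at hN
  obtain ⟨k, hk⟩ := ht.exists_reaches hX a hx hy
  filter_upwards [eventually_ge_atTop (N + k)] with n hn
  have hret : Reaches X a (n - k) x x := hN (n - k) (by omega) (hp.dvd.trans (one_dvd _))
  simpa [Nat.sub_add_cancel (show k ≤ n by omega)] using hret.trans hX ha hk

lemma exists_period_ne_one {m : ℕ} (hX : ∀ n, MapsTo (translate n) X X) (hm : Gluing X m)
    (ht : IsTransitiveSubshift X) (hmix : ¬ IsMixing X) :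
    ∃ a ≥ m, ∃ x ∈ X, period X a x ≠ 1 := by
  contrapose! hmix
  exact isMixing_of_eventually_reaches hX m fun a ha x hx y hy =>
    eventually_reaches_of_period_eq_one hX (hm.mono ha) ht hx hy (hmix a ha x hx)

/-- The phase of `x` relative to `x₀`: the least travel time in `X` from the central word of `x₀`
to that of `x`, modulo the period. When `x` cannot be reached it is `0`, as `sInf ∅ = 0`. -/
noncomputable def phase (X : Set (ℤ → A)) (a : ℕ) (x₀ x : ℤ → A) : ZMod (period X a x₀) :=
  (sInf {n | Reaches X a n x₀ x} : ℕ)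

variable {x₀ : ℤ → A}

lemma phase_eq_of_reaches (hX : ∀ n, MapsTo (translate n) X X) (ha : Gluing X a)
    (ht : IsTransitiveSubshift X) (hx₀ : x₀ ∈ X) (hx : x ∈ X) (hn : Reaches X a n x₀ x) :
    phase X a x₀ x = n := by
  obtain ⟨k, hk⟩ := ht.exists_reaches hX a hx hx₀
  have hloop {l : ℕ} (hl : Reaches X a l x₀ x) : (l + k : ZMod (period X a x₀)) = 0 := by
    rw [← Nat.cast_add, ZMod.natCast_eq_zero_iff]
    exact Nat.setGcd_dvd_of_mem (hl.trans hX ha hk)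
  have hleast : Reaches X a (sInf {l | Reaches X a l x₀ x}) x₀ x :=
    Nat.sInf_mem (s := {l | Reaches X a l x₀ x}) ⟨n, hn⟩
  exact add_right_cancel ((hloop hleast).trans (hloop hn).symm)

lemma phase_shift (hX : ∀ n, MapsTo (translate n) X X) (ha : Gluing X a)
    (ht : IsTransitiveSubshift X) (hx₀ : x₀ ∈ X) (hx : x ∈ X) :
    phase X a x₀ (shift x) = phase X a x₀ x + 1 := by
  obtain ⟨n, hn⟩ := ht.exists_reaches hX a hx₀ hx
  have hσx : shift x ∈ X := hX 1 hx
  rw [phase_eq_of_reaches hX ha ht hx₀ hx hn,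
    phase_eq_of_reaches hX ha ht hx₀ hσx (hn.trans hX ha (reaches_shift hx)), Nat.cast_succ]

lemma dependsOn_phase : DependsOn (phase X a x₀) (Ico 0 (a : ℤ)) := by
  intro x y hxy
  have : word x 0 a = word y 0 a := word_eq_word_iff.2 (by rwa [zero_add])
  simp only [phase, Reaches, this]

end Travel

section Topology

variable [TopologicalSpace A]

lemma eventually_mem_of_word_eq {U : Set (ℤ → A)} (hU : IsOpen U) {x : ℤ → A} (hx : x ∈ U) :
    ∀ᶠ c : ℕ in atTop, ∀ y, word y (-c) (2 * c) = word x (-c) (2 * c) → y ∈ U := by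
  obtain ⟨I, u, hu, hIU⟩ := isOpen_pi_iff.1 hU x hx
  filter_upwards [eventually_gt_atTop (I.sup Int.natAbs)] with c hc y hy
  refine hIU fun i hi => ?_
  have hic : i.natAbs ≤ I.sup Int.natAbs := Finset.le_sup (f := Int.natAbs) hi
  rw [word_eq_word_iff.1 hy ⟨by omega, by omega⟩]
  exact (hu i hi).2

lemma continuous_shift : Continuous (shift (A := A)) :=
  continuous_pi fun i => continuous_apply (i + 1)

lemma eventually_inter_preimage_shift_nonempty {U V : Set (ℤ → A)} (hU : IsOpen U)
    (hV : IsOpen V) (hUne : U.Nonempty) (hVne : V.Nonempty) :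
    ∀ᶠ n in atTop, (U ∩ shift^[n] ⁻¹' V).Nonempty := by
  obtain ⟨x, hx⟩ := hUne
  obtain ⟨y, hy⟩ := hVne
  obtain ⟨c, hcU, hcV⟩ :=
    ((eventually_mem_of_word_eq hU hx).and (eventually_mem_of_word_eq hV hy)).exists
  filter_upwards [eventually_ge_atTop (2 * c)] with n hn
  refine ⟨fun i => if i < c then x i else y (i - n), hcU _ ?_, ?_⟩
  · exact word_eq_word_iff.2 fun i hi => if_pos (by have := hi.2; omega)
  · rw [mem_preimage, shift_iterate]
    refine hcV _ (word_eq_word_iff.2 fun i hi => ?_)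
    have hci : ¬ i + n < c := by have := hi.1; omega
    simp [translate, hci]

lemma IsTransitiveSubshift.exists_mem_shift_iterate_mem {X U V : Set (ℤ → A)}
    (ht : IsTransitiveSubshift X) (hX : ∀ n, MapsTo (translate n) X X) (hU : IsOpen U)
    (hV : IsOpen V) (hXU : (X ∩ U).Nonempty) (hXV : (X ∩ V).Nonempty) :
    ∃ n, ∃ z ∈ X, z ∈ U ∧ shift^[n] z ∈ V := by
  obtain ⟨x, hx, hxU⟩ := hXU
  obtain ⟨y, hy, hyV⟩ := hXV
  obtain ⟨c, hcU, hcV⟩ :=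
    ((eventually_mem_of_word_eq hU hxU).and (eventually_mem_of_word_eq hV hyV)).exists
  obtain ⟨n, z, hz, hzx, hzy⟩ := ht.exists_reaches hX (2 * c) (hX (-c) hx) (hX (-c) hy)
  refine ⟨n, translate c z, hX c hz, hcU _ ?_, ?_⟩
  · rw [word_translate, neg_add_cancel, hzx, word_translate, zero_add]
  · rw [shift_iterate]
    apply hcV
    rw [word_translate, word_translate, neg_add_eq_sub, sub_add_cancel, hzy, word_translate,
      zero_add]

lemma IsTransitiveSubshift.apply_eq_of_shift_invariant {X : Set (ℤ → A)}
    (ht : IsTransitiveSubshift X) (hX : ∀ n, MapsTo (translate n) X X) {β : Type*}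
    {D : (ℤ → A) → β} (hD : IsLocallyConstant D) (hDσ : ∀ x ∈ X, D (shift x) = D x)
    {x y : ℤ → A} (hx : x ∈ X) (hy : y ∈ X) : D x = D y := by
  obtain ⟨n, z, hz, hzx, hzy⟩ := ht.exists_mem_shift_iterate_mem hX
    (hD.isOpen_fiber (D x)) (hD.isOpen_fiber (D y)) ⟨x, hx, rfl⟩ ⟨y, hy, rfl⟩
  calc D x = D z := hzx.symm
    _ = D (shift^[n] z) := by
      rw [apply_iterate_of_mapsTo (σ := shift) (h := id) (hX 1) hDσ n hz, iterate_id, id]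
    _ = D y := hzy

lemma IsTransitiveSubshift.exists_phase_increment {X : Set (ℤ → A)}
    (ht : IsTransitiveSubshift X) (hX : ∀ n, MapsTo (translate n) X X)
    {f : (ℤ → A) → (ℤ → A)} (hf : IsCA f) (hfX : MapsTo f X X)
    {G : Type*} [AddCommGroup G] {g : (ℤ → A) → G} (hg : IsLocallyConstant g) {c : G}
    (hgc : ∀ x ∈ X, g (shift x) = g x + c) : ∃ k, ∀ x ∈ X, g (f x) = g x + k := by
  rcases X.eq_empty_or_nonempty with rfl | ⟨x₀, hx₀⟩
  · exact ⟨0, by simp⟩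
  have hD : IsLocallyConstant fun x => g (f x) - g x := (hg.comp_continuous hf.1).sub hg
  have hDσ : ∀ x ∈ X, g (f (shift x)) - g (shift x) = g (f x) - g x := by
    intro x hx
    rw [show f (shift x) = shift (f x) from congrFun hf.2 x, hgc _ (hfX hx), hgc x hx,
      add_sub_add_right_eq_sub]
  exact ⟨g (f x₀) - g x₀, fun x hx => by
    rw [← ht.apply_eq_of_shift_invariant hX hD hDσ hx hx₀, add_sub_cancel]⟩

section GenericLimitSet

variable {f : (ℤ → A) → (ℤ → A)}

lemma realm_genLimitSet_mem_residual [SecondCountableTopology A] (f : (ℤ → A) → (ℤ → A)) :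
    realm f (genLimitSet f) ∈ residual (ℤ → A) := by
  obtain ⟨S, hScount, hS, hSU⟩ := TopologicalSpace.isOpen_sUnion_countable
    (compl '' {C : Set (ℤ → A) | IsClosed C ∧ realm f C ∈ residual (ℤ → A)})
    (forall_mem_image.2 fun C hC => hC.1.isOpen_compl)
  have hres : ⋂ U ∈ S, realm f Uᶜ ∈ residual (ℤ → A) := by
    refine (countable_bInter_mem hScount).2 fun U hU => ?_
    obtain ⟨C, hC, rfl⟩ := hS hU
    rw [compl_compl]
    exact hC.2
  have hinter : genLimitSet f = (⋃₀ S)ᶜ := by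
    rw [hSU, ← compl_sInter, compl_compl, genLimitSet]
  filter_upwards [hres] with x hx y hy
  rw [hinter]
  rintro ⟨U, hU, hyU⟩
  exact mem_iInter₂.1 hx U hU hy hyU

lemma isClosed_genLimitSet (f : (ℤ → A) → (ℤ → A)) : IsClosed (genLimitSet f) :=
  isClosed_sInter fun _ hC => hC.1

lemma apply_mem_omegaSet (hf : Continuous f) {x y : ℤ → A} (hy : y ∈ omegaSet f x) :
    f y ∈ omegaSet f x := by
  have hfy : MapClusterPt (f y) atTop (f ∘ fun t => f^[t] x) :=
    MapClusterPt.continuousAt_comp hf.continuousAt hy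
  have hsucc : (f ∘ fun t => f^[t] x) = (fun t => f^[t] x) ∘ (· + 1) :=
    funext fun t => (iterate_succ_apply' f t x).symm
  rw [hsucc] at hfy
  exact hfy.of_comp (tendsto_add_atTop_nat 1)

lemma mapsTo_genLimitSet [SecondCountableTopology A] (hf : Continuous f) :
    MapsTo f (genLimitSet f) (genLimitSet f) := by
  intro x hx
  refine hx (f ⁻¹' genLimitSet f) ⟨(isClosed_genLimitSet f).preimage hf, ?_⟩
  filter_upwards [realm_genLimitSet_mem_residual f] with z hz y hy
  exact hz (apply_mem_omegaSet hf hy)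

lemma eventually_iterate_mem_of_genLimitSet_subset [CompactSpace A] [SecondCountableTopology A]
    {O : Set (ℤ → A)} (hO : IsOpen O) (hfO : genLimitSet f ⊆ O) :
    ∀ᶠ x in residual (ℤ → A), ∀ᶠ t in atTop, f^[t] x ∈ O := by
  filter_upwards [realm_genLimitSet_mem_residual f] with x hx
  by_contra hfreq
  obtain ⟨y, hyO, hy⟩ := hO.isClosed_compl.isCompact.exists_mapClusterPt_of_frequently
    (not_eventually.1 hfreq)
  exact hyO (hfO (hx hy))

variable [CompactSpace A] [T2Space A] [SecondCountableTopology A] [Nonempty A]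
  {G : Type*} [AddCommGroup G] {g : (ℤ → A) → G}

lemma exists_isOpen_phase_iterate_eq (hf : Continuous f) (hg : IsLocallyConstant g) {k : G}
    (hgk : ∀ x ∈ genLimitSet f, g (f x) = g x + k) :
    ∃ V : Set (ℤ → A), IsOpen V ∧ V.Nonempty ∧
      ∃ T, ∀ x ∈ V, ∀ y ∈ V, ∀ t ≥ T, g (f^[t] x) = g (f^[t] y) := by
  have hD : IsLocallyConstant fun x => g (f x) - g x := (hg.comp_continuous hf).sub hg
  obtain ⟨T, x₀, hx₀⟩ := exists_nonempty_interior_forall_ge hf.iterate (hD.isClosed_fiber k)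
    (eventually_iterate_mem_of_genLimitSet_subset (hD.isOpen_fiber k)
      fun x hx => sub_eq_iff_eq_add'.2 (hgk x hx))
  have hgT : IsLocallyConstant (g ∘ f^[T]) := hg.comp_continuous (hf.iterate T)
  refine ⟨_, isOpen_interior.inter (hgT.isOpen_fiber (g (f^[T] x₀))), ⟨x₀, hx₀, rfl⟩, T, ?_⟩
  rintro x ⟨hx, hxT⟩ y ⟨hy, hyT⟩ t ht
  induction t, ht using Nat.le_induction with
  | base => exact hxT.trans hyT.symm
  | succ t ht ih =>
    rw [iterate_succ_apply', iterate_succ_apply',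
      sub_eq_iff_eq_add'.1 (interior_subset hx t ht),
      sub_eq_iff_eq_add'.1 (interior_subset hy t ht), ih]

lemma eventually_nsmul_eq_zero_of_phase (hf : IsCA f)
    (hX : ∀ n, MapsTo (translate n) (genLimitSet f) (genLimitSet f))
    (ht : IsTransitiveSubshift (genLimitSet f)) (hg : IsLocallyConstant g) {c : G}
    (hgc : ∀ x ∈ genLimitSet f, g (shift x) = g x + c) :
    ∀ᶠ n : ℕ in atTop, n • c = 0 := by
  obtain ⟨k, hk⟩ := ht.exists_phase_increment hX hf (mapsTo_genLimitSet hf.1) hg hgc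
  obtain ⟨V, hV, hVne, T, hVT⟩ := exists_isOpen_phase_iterate_eq hf.1 hg hk
  filter_upwards [eventually_inter_preimage_shift_nonempty hV hV hVne hVne] with n hn
  have hσn : Continuous (shift (A := A))^[n] := continuous_shift.iterate n
  have hD : IsLocallyConstant fun x => g (shift^[n] x) - g x := (hg.comp_continuous hσn).sub hg
  have hDn : ∀ x ∈ genLimitSet f, g (shift^[n] x) - g x = n • c := fun x hx => by
    rw [apply_iterate_of_mapsTo (σ := shift) (h := (· + c)) (hX 1) hgc n hx, add_right_iterate,
      add_sub_cancel_left]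
  have hgeneric := eventually_iterate_mem_of_genLimitSet_subset (hD.isOpen_fiber (n • c)) hDn
  obtain ⟨x, ⟨hxV, hxσ⟩, hx⟩ := (dense_of_mem_residual hgeneric).inter_open_nonempty
    _ (hV.inter (hV.preimage hσn)) hn
  obtain ⟨t, htn, htT⟩ := (hx.and (eventually_ge_atTop T)).exists
  have hcomm : Function.Commute f shift := congrFun hf.2
  calc
    n • c = g (shift^[n] (f^[t] x)) - g (f^[t] x) := htn.symm
    _ = g (f^[t] (shift^[n] x)) - g (f^[t] x) := by rw [hcomm.iterate_iterate t n x]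
    _ = 0 := sub_eq_zero.2 (hVT _ hxσ x hxV t htT)

theorem eq_zero_of_phase_genLimitSet (hf : IsCA f)
    (hX : ∀ n, MapsTo (translate n) (genLimitSet f) (genLimitSet f))
    (ht : IsTransitiveSubshift (genLimitSet f)) (hg : IsLocallyConstant g) {c : G}
    (hgc : ∀ x ∈ genLimitSet f, g (shift x) = g x + c) : c = 0 := by
  obtain ⟨N, hN⟩ := eventually_atTop.1 (eventually_nsmul_eq_zero_of_phase hf hX ht hg hgc)
  simpa [succ_nsmul, hN N le_rfl] using hN (N + 1) (by omega)

end GenericLimitSet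

end Topology

/-- a transitive but non-mixing subshift of finite type is not the generic
limit set of any cellular automaton. -/
theorem stmt19 [Fintype A] [Nonempty A] [TopologicalSpace A] [DiscreteTopology A]
    (X : Set (ℤ → A))
    (hSFT : ∃ F : Set (List A), F.Finite ∧
      X = {x : ℤ → A | ∀ w ∈ F, ∀ i : ℤ, word x i w.length ≠ w})
    (htrans : IsTransitiveSubshift X) (hnotmix : ¬ IsMixing X) :
    ∀ f : (ℤ → A) → (ℤ → A), IsCA f → genLimitSet f ≠ X := by
  rintro f hf rfl
  have hX := IsSFT.mapsTo_translate hSFT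
  obtain ⟨m, hm⟩ := IsSFT.exists_gluing hSFT
  obtain ⟨a, hma, x₀, hx₀, hp⟩ := exists_period_ne_one hX hm htrans hnotmix
  have hphase : IsLocallyConstant (phase (genLimitSet f) a x₀) :=
    isLocallyConstant_of_dependsOn (finite_Ico 0 (a : ℤ)) dependsOn_phase
  have hone : (1 : ZMod (period (genLimitSet f) a x₀)) = 0 :=
    eq_zero_of_phase_genLimitSet hf hX htrans hphase fun x hx =>
      phase_shift hX (hm.mono hma) htrans hx₀ hx
  exact hp (ZMod.one_eq_zero_iff.1 hone)

end Gls
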